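/- Let m ≥ 1, let l = 2, let 0 ≤ s ≤ 2m-1, and set d = (2^{4m}-1)/(2^m+1) + 2^s; assume gcd(d, 2^{4m}-1) = 1. Let σ be the multiplicative inverse of 2^s modulo 2^{4m}-1 and set u = gcd(d·σ + 1, 2^m+1). If u < 2^m + 1, then S_d(1) ≥ 2^{2m+1}. -/

import Mathlib

noncomputable instance (p n : ℕ) [Fact p.Prime] : Fintype (GaloisField p n) :=
  Fintype.ofFinite _

/-- The Weil sum `S_d(z) = ∑_{x ∈ GF(2^n)} (-1)^{Tr(zx + x^d)}`, where `Tr` is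
the absolute trace from `GF(2^n)` to `GF(2)`. -/
noncomputable def binaryWeilSum (n d : ℕ) (z : GaloisField 2 n) : ℤ :=
  ∑ x : GaloisField 2 n,
    (-1 : ℤ) ^ (Algebra.trace (ZMod 2) (GaloisField 2 n) (z * x + x ^ d)).val

/-!
Write `q = 2 ^ m`, `|F| = q ^ (2 * l)`, `D = (|F| - 1) / (q + 1)` and `ψ x = (-1) ^ Tr x`. Since `ψ`
is invariant under Frobenius, `ψ (x + x ^ (D + 2 ^ s)) = ψ (x * (1 + x ^ (D * σ)))`. The factor
`1 + x ^ (D * σ)` does not change when `x` is multiplied by a `(q + 1)`-th power, so averaging over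
such powers turns the Weil sum into an average of `Q (g * (1 + g ^ (D * σ)))` over units `g`, where
`Q a = ∑ y, ψ (a * y ^ (q + 1))`. The form `y ↦ Tr (a * y ^ (q + 1))` is quadratic, which gives
`Q a = (-q) ^ (l + 1)` if `a ^ D = 1` and `Q a = (-q) ^ l` for all other `a ≠ 0`.

For a `(q + 1)`-th root of unity `t ≠ 1` one has `(1 + t) ^ D = t ^ (-l)`, so
`(g * (1 + g ^ (D * σ))) ^ D = 1` exactly when `g ^ (D * (l * σ - 1)) = 1`, as long as `g ^ D ≠ 1`.
Counting such `g` evaluates the Weil sum exactly: with `X = (-q) ^ l` and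
`u = gcd (d * σ + 1, q + 1) = gcd (l * σ - 1, q + 1)`,
`(q + 1) * S_d(1) = X * (X + 2 * q + 1 - u * (q + 1))`.
A proper divisor `u` of `q + 1` is at most `q - 1`, and then for even `l` the last factor is at
least `2 * (q + 1)`.
-/

open Finset

section Arithmetic

variable {q l : ℕ}

/-- The integer `D = (q ^ (2 * l) - 1) / (q + 1)`, written without division. In the units of a field
with `q ^ (2 * l)` elements, raising to the power `D` maps onto the `(q + 1)`-th roots of unity. -/
def cofactor (q l : ℕ) : ℕ := (q - 1) * ∑ i ∈ range l, (q ^ 2) ^ i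

lemma cofactor_mul_succ (hq : 1 ≤ q) (l : ℕ) : cofactor q l * (q + 1) = q ^ (2 * l) - 1 := by
  have hfactor : (q - 1) * (q + 1) = q ^ 2 - 1 := by simpa [mul_comm] using (Nat.sq_sub_sq q 1).symm
  rw [cofactor, mul_right_comm, hfactor, mul_comm, geom_sum_mul_of_one_le (Nat.one_le_pow _ _ hq),
    pow_mul]

lemma sq_modEq_one (hq : 1 ≤ q) : q ^ 2 ≡ 1 [MOD q + 1] :=
  ((Nat.modEq_iff_dvd' (Nat.one_le_pow _ _ hq)).2 ⟨q - 1, Nat.sq_sub_sq q 1⟩).symm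

lemma sum_sq_pow_modEq (hq : 1 ≤ q) (l : ℕ) :
    ∑ i ∈ range l, (q ^ 2) ^ i ≡ l [MOD q + 1] := by
  have hsum := Nat.ModEq.sum (s := range l) fun i _ ↦ (sq_modEq_one hq).pow i
  simpa only [one_pow, sum_const, card_range, smul_eq_mul, mul_one] using hsum

lemma succ_dvd_cofactor_add (hq : 1 ≤ q) (l : ℕ) : q + 1 ∣ cofactor q l + 2 * l := by
  obtain ⟨r, rfl⟩ := Nat.exists_eq_add_of_le' hq
  have hmod : cofactor (r + 1) l + 2 * l ≡ r * l + 2 * l [MOD r + 1 + 1] :=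
    ((sum_sq_pow_modEq hq l).mul_left r).add_right _
  exact hmod.dvd_iff dvd_rfl |>.2 ⟨l, by ring⟩

-- Modulo `q + 1` the left-hand number is `-2 * (l * σ - 1)`, and `q + 1` is odd.
lemma gcd_cofactor_add_mul_add_one {r σ : ℕ} (hq : 1 ≤ q) (heven : Even q) (hlσ : 1 ≤ l * σ)
    (hrσ : r * σ ≡ 1 [MOD q + 1]) :
    ((cofactor q l + r) * σ + 1).gcd (q + 1) = (l * σ - 1).gcd (q + 1) := by
  have hsum : q + 1 ∣ (cofactor q l + r) * σ + 1 + 2 * (l * σ - 1) := by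
    have hmod : (cofactor q l + 2 * l) * σ + r * σ ≡ 0 * σ + 1 [MOD q + 1] :=
      ((Nat.modEq_zero_iff_dvd.2 (succ_dvd_cofactor_add hq l)).mul_right σ).add hrσ
    refine (Nat.modEq_iff_dvd' ?_).1 hmod.symm |>.trans (dvd_of_eq ?_)
    · nlinarith
    · grind
  rw [← Nat.Coprime.gcd_mul_left_cancel (l * σ - 1) (Nat.coprime_two_left.2 heven.add_one)]
  refine Nat.dvd_antisymm (Nat.dvd_gcd ?_ (Nat.gcd_dvd_right _ _))
    (Nat.dvd_gcd ?_ (Nat.gcd_dvd_right _ _))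
  · exact (Nat.dvd_add_right (Nat.gcd_dvd_left _ _)).1 ((Nat.gcd_dvd_right _ _).trans hsum)
  · exact (Nat.dvd_add_left (Nat.gcd_dvd_left _ _)).1 ((Nat.gcd_dvd_right _ _).trans hsum)

lemma succ_le_of_dvd_succ_of_lt {u : ℕ} (hq : 2 ≤ q) (hdvd : u ∣ q + 1) (hlt : u < q + 1) :
    u + 1 ≤ q := by
  obtain ⟨k, hk⟩ := hdvd
  have hk2 : 2 ≤ k := by
    by_contra! hk2
    interval_cases k <;> omega
  have := Nat.mul_le_mul_left u hk2
  omega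

lemma eq_of_sq_eq_sq_of_dvd_sub_one {n x y : ℤ} (hn : 2 < n) (hsq : x ^ 2 = y ^ 2)
    (hx : n ∣ x - 1) (hy : n ∣ y - 1) : x = y := by
  refine (sq_eq_sq_iff_eq_or_eq_neg.1 hsq).resolve_right fun hneg ↦ ?_
  have hdvd : n ∣ -2 := (dvd_add hx hy).trans (dvd_of_eq (by rw [hneg]; ring))
  linarith [Int.le_of_dvd two_pos (dvd_neg.1 hdvd)]

end Arithmetic

section FiniteGroups

lemma natCard_ker_dvd_sum_comp {G M R : Type*} [Group G] [Fintype G] [Monoid M] [Semiring R]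
    (φ : G →* M) (f : M → R) : (Nat.card φ.ker : R) ∣ ∑ g, f (φ g) := by
  classical
  rw [← sum_fiberwise_of_maps_to (t := univ.image φ) fun g _ ↦ mem_image_of_mem φ (mem_univ g)]
  refine dvd_sum fun x hx ↦ ?_
  have hfiber : #{g | φ g = x} = Nat.card φ.ker := by
    obtain ⟨g, -, rfl⟩ := mem_image.1 hx
    rw [MonoidHom.card_fiber_eq_of_mem_range φ ⟨g, rfl⟩ ⟨1, map_one φ⟩, ← Nat.subtype_card _]
    simp
  rw [sum_congr rfl fun g hg ↦ by rw [(mem_filter.1 hg).2], sum_const, hfiber, nsmul_eq_mul]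
  exact dvd_mul_right _ _

variable {G : Type*} [CommGroup G] [IsCyclic G]

lemma card_filter_pow_eq_one [Fintype G] [DecidableEq G] (n : ℕ) :
    #{g : G | g ^ n = 1} = (Fintype.card G).gcd n := by
  rw [← Nat.card_eq_fintype_card, ← IsCyclic.card_powMonoidHom_ker, Nat.subtype_card]
  simp

lemma exists_pow_eq_of_pow_eq_one [Finite G] {k n : ℕ} (hcard : Nat.card G = k * n) {g : G}
    (hg : g ^ k = 1) : ∃ h : G, h ^ n = g := by
  have hn : 0 < n := Nat.pos_of_mul_pos_left (hcard ▸ Nat.card_pos)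
  have hle : (powMonoidHom n : G →* G).range ≤ (powMonoidHom k).ker := by
    rintro _ ⟨h, rfl⟩
    simp [MonoidHom.mem_ker, ← pow_mul, mul_comm n k, ← hcard]
  have heq := Subgroup.eq_of_le_of_card_ge hle <| by
    rw [IsCyclic.card_powMonoidHom_ker, IsCyclic.card_powMonoidHom_range, hcard,
      Nat.gcd_mul_right_left, Nat.gcd_mul_left_left, Nat.mul_div_cancel _ hn]
  exact heq.ge (MonoidHom.mem_ker.2 hg)

end FiniteGroups

section FiniteFields

variable {F : Type*} [Fintype F] {m l : ℕ}

lemma cofactor_mul_succ_eq_card_sub_one (hF : Fintype.card F = (2 ^ m) ^ (2 * l)) :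
    cofactor (2 ^ m) l * (2 ^ m + 1) = Fintype.card F - 1 := by
  rw [hF, cofactor_mul_succ Nat.one_le_two_pow]

variable [Field F]

lemma sum_eq_apply_zero_add_sum_units {M : Type*} [DecidableEq F] [AddCommMonoid M] (f : F → M) :
    ∑ x, f x = f 0 + ∑ g : Fˣ, f g := by
  rw [Fintype.sum_eq_add_sum_subtype_ne f 0, ← unitsEquivNeZero.sum_comp]
  rfl

lemma dvd_sum_pow_sub_apply_zero {R : Type*} [Ring R] {n : ℕ} (hn : n ∣ Fintype.card F - 1)
    (f : F → R) : (n : R) ∣ ∑ y, f (y ^ n) - f 0 := by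
  classical
  have hpos : n ≠ 0 := by
    rintro rfl
    have := Fintype.one_lt_card (α := F)
    have := Nat.eq_zero_of_zero_dvd hn
    omega
  have hker : Nat.card (powMonoidHom n : Fˣ →* Fˣ).ker = n := by
    rw [IsCyclic.card_powMonoidHom_ker, Nat.card_eq_fintype_card, Fintype.card_units,
      Nat.gcd_eq_right hn]
  have hdvd := natCard_ker_dvd_sum_comp (powMonoidHom n : Fˣ →* Fˣ) fun g ↦ f g
  rw [sum_eq_apply_zero_add_sum_units, zero_pow hpos, add_sub_cancel_left]
  rw [hker] at hdvd
  simpa using hdvd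

lemma pow_eq_self_of_modEq_one {k : ℕ} (hk : k ≡ 1 [MOD Fintype.card F - 1]) (hk0 : k ≠ 0)
    (x : F) : x ^ k = x := by
  obtain rfl | hx := eq_or_ne x 0
  · exact zero_pow hk0
  · rw [pow_eq_pow_of_modEq hk (FiniteField.pow_card_sub_one_eq_one x hx), pow_one]

lemma two_le_two_pow_of_card (hF : Fintype.card F = (2 ^ m) ^ (2 * l)) : 2 ≤ 2 ^ m := by
  refine Nat.le_self_pow ?_ 2
  rintro rfl
  exact Fintype.one_lt_card.ne' (by simpa using hF)

lemma pow_cofactor_mul_succ (hF : Fintype.card F = (2 ^ m) ^ (2 * l)) {x : F} (hx : x ≠ 0) :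
    x ^ (cofactor (2 ^ m) l * (2 ^ m + 1)) = 1 := by
  rw [cofactor_mul_succ_eq_card_sub_one hF, FiniteField.pow_card_sub_one_eq_one x hx]

lemma cofactor_pos (hF : Fintype.card F = (2 ^ m) ^ (2 * l)) : 0 < cofactor (2 ^ m) l :=
  Nat.pos_of_mul_pos_right <|
    (cofactor_mul_succ_eq_card_sub_one hF).symm ▸ Nat.sub_pos_of_lt Fintype.one_lt_card

lemma card_filter_units_pow_eq_one [DecidableEq F] (hF : Fintype.card F = (2 ^ m) ^ (2 * l))
    (n : ℕ) : #{g : Fˣ | (g : F) ^ (cofactor (2 ^ m) l * n) = 1} =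
      cofactor (2 ^ m) l * n.gcd (2 ^ m + 1) := by
  simp only [← Units.val_pow_eq_pow_val, Units.val_eq_one]
  rw [card_filter_pow_eq_one, Fintype.card_units, ← cofactor_mul_succ_eq_card_sub_one hF,
    Nat.gcd_mul_left, Nat.gcd_comm]

end FiniteFields

section TraceCharacter

variable (F : Type*) [Field F] [Algebra (ZMod 2) F]

/-- The canonical additive character `x ↦ (-1) ^ Tr x` of a field of characteristic two. It takes
its values in `ℤ`, so that character sums can be compared modulo integers. -/
noncomputable def traceChar : AddChar F ℤ :=
  (AddChar.zmodChar 2 (neg_one_sq : (-1 : ℤ) ^ 2 = 1)).compAddMonoidHom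
    (Algebra.trace (ZMod 2) F).toAddMonoidHom

variable {F}

lemma traceChar_apply (x : F) : traceChar F x = (-1) ^ (Algebra.trace (ZMod 2) F x).val := rfl

section Finite

variable [Finite F]

lemma traceChar_isPrimitive : (traceChar F).IsPrimitive := by
  obtain ⟨x, hx⟩ := Algebra.trace_surjective (ZMod 2) F 1
  refine .of_ne_one (AddChar.ne_one_iff.2 ⟨x, ?_⟩)
  rw [traceChar_apply, hx]
  decide

lemma traceChar_pow_two_pow (k : ℕ) (x : F) : traceChar F (x ^ 2 ^ k) = traceChar F x := by
  induction k with
  | zero => simp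
  | succ k ih =>
    have htrace := Algebra.trace_eq_of_algEquiv
      (FiniteField.frobeniusAlgEquivOfAlgebraic (ZMod 2) F) (x ^ 2 ^ k)
    rw [FiniteField.coe_frobeniusAlgEquivOfAlgebraic, ZMod.card] at htrace
    rw [pow_succ, pow_mul, traceChar_apply, htrace, ← traceChar_apply, ih]

lemma traceChar_add_pow_add_two_pow {x : F} {s σ : ℕ} (hx : x ^ (2 ^ s * σ) = x) (k : ℕ) :
    traceChar F (x + x ^ (k + 2 ^ s)) = traceChar F (x * (1 + x ^ (k * σ))) := by
  have hpow : (x * x ^ (k * σ)) ^ 2 ^ s = x ^ (k + 2 ^ s) := by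
    rw [mul_pow, ← pow_mul, mul_assoc, mul_comm k, mul_comm σ, pow_mul, hx, ← pow_add, add_comm]
  rw [mul_one_add, AddChar.map_add_eq_mul, AddChar.map_add_eq_mul, ← hpow, traceChar_pow_two_pow]

-- Polarization of the quadratic form `y ↦ Tr (a * y ^ (2 ^ m + 1))`; applying Frobenius to one of
-- the two cross terms makes the result linear in `y ^ 2 ^ m`.
lemma traceChar_mul_traceChar_add (m : ℕ) (a y w : F) :
    traceChar F (a * y ^ (2 ^ m + 1)) * traceChar F (a * (y + w) ^ (2 ^ m + 1)) =
      traceChar F (a * w ^ (2 ^ m + 1)) *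
        traceChar F (y ^ 2 ^ m * (a * w + (a * w ^ 2 ^ m) ^ 2 ^ m)) := by
  have : CharP F 2 := charP_of_injective_algebraMap' (ZMod 2) 2
  have hfrob : traceChar F (y ^ 2 ^ m * (a * w ^ 2 ^ m) ^ 2 ^ m) =
      traceChar F (y * (a * w ^ 2 ^ m)) := by rw [← mul_pow, traceChar_pow_two_pow]
  rw [mul_add (y ^ 2 ^ m), AddChar.map_add_eq_mul _ (y ^ 2 ^ m * _), hfrob]
  simp only [← AddChar.map_add_eq_mul]
  congr 1
  rw [pow_succ (y + w), add_pow_char_pow]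
  linear_combination CharTwo.add_self_eq_zero (a * y ^ (2 ^ m + 1))

end Finite

lemma sum_traceChar_pow_two_pow_mul [Fintype F] [DecidableEq F] (m : ℕ) (c : F) :
    ∑ y, traceChar F (y ^ 2 ^ m * c) = if c = 0 then (Fintype.card F : ℤ) else 0 := by
  have : CharP F 2 := charP_of_injective_algebraMap' (ZMod 2) 2
  have hsum := (iterateFrobeniusEquiv F 2 m).toEquiv.sum_comp fun y ↦ traceChar F (y * c)
  simp only [RingEquiv.toEquiv_eq_coe, EquivLike.coe_coe, iterateFrobeniusEquiv_apply,
    iterateFrobenius_def] at hsum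
  rw [hsum, AddChar.sum_mulShift c traceChar_isPrimitive]
  push_cast
  rfl

end TraceCharacter

section MonomialSums

variable {F : Type*} [Field F] [Algebra (ZMod 2) F] [Fintype F]

/-- The exponential sum of the monomial `a * y ^ n`, a Gaussian period up to normalization. -/
noncomputable def monomialSum (n : ℕ) (a : F) : ℤ := ∑ y, traceChar F (a * y ^ n)

lemma monomialSum_zero_right (n : ℕ) : monomialSum n (0 : F) = Fintype.card F := by
  simp [monomialSum]

lemma sum_monomialSum {n : ℕ} (hn : n ≠ 0) : ∑ a : F, monomialSum n a = Fintype.card F := by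
  classical
  simp only [monomialSum]
  rw [sum_comm]
  simp [AddChar.sum_mulShift _ traceChar_isPrimitive, hn]

lemma monomialSum_mul_pow (n : ℕ) (a : F) {b : F} (hb : b ≠ 0) :
    monomialSum n (a * b ^ n) = monomialSum n a := by
  simpa [monomialSum, mul_pow, mul_assoc] using
    Equiv.sum_comp (Equiv.mulLeft₀ b hb) fun y ↦ traceChar F (a * y ^ n)

lemma monomialSum_eq_one_add_sum_units [DecidableEq F] {n : ℕ} (hn : n ≠ 0) (a : F) :
    monomialSum n a = 1 + ∑ y : Fˣ, traceChar F (a * y ^ n) := by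
  rw [monomialSum, sum_eq_apply_zero_add_sum_units]
  simp [hn]

lemma dvd_monomialSum_sub_one {n : ℕ} (hn : n ∣ Fintype.card F - 1) (a : F) :
    (n : ℤ) ∣ monomialSum n a - 1 := by
  have hdvd := dvd_sum_pow_sub_apply_zero hn fun y ↦ traceChar F (a * y)
  rwa [mul_zero, AddChar.map_zero_eq_one] at hdvd

lemma monomialSum_sq_eq_card {m : ℕ} {a : F}
    (ha : ∀ w ≠ 0, (a * w ^ (2 ^ m + 1)) ^ 2 ^ m ≠ a * w ^ (2 ^ m + 1)) :
    monomialSum (2 ^ m + 1) a ^ 2 = Fintype.card F := by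
  classical
  have : CharP F 2 := charP_of_injective_algebraMap' (ZMod 2) 2
  have hradical : ∀ w ≠ 0, a * w + (a * w ^ 2 ^ m) ^ 2 ^ m ≠ 0 := by
    intro w hw hzero
    refine ha w hw ?_
    linear_combination -w ^ 2 ^ m * CharTwo.add_eq_zero.1 hzero
  calc monomialSum (2 ^ m + 1) a ^ 2
      = ∑ y, ∑ w, traceChar F (a * y ^ (2 ^ m + 1)) * traceChar F (a * (y + w) ^ (2 ^ m + 1)) := by
        rw [sq, monomialSum, sum_mul]
        refine sum_congr rfl fun y _ ↦ ?_
        rw [← Equiv.sum_comp (Equiv.addLeft y), mul_sum]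
        rfl
    _ = ∑ w, traceChar F (a * w ^ (2 ^ m + 1)) *
          ∑ y, traceChar F (y ^ 2 ^ m * (a * w + (a * w ^ 2 ^ m) ^ 2 ^ m)) := by
        rw [sum_comm]
        simp only [traceChar_mul_traceChar_add, mul_sum]
    _ = Fintype.card F := by
        rw [Fintype.sum_eq_single 0 fun w hw ↦ by
          rw [sum_traceChar_pow_two_pow_mul, if_neg (hradical w hw), mul_zero]]
        simp

end MonomialSums

section SemiprimitiveCase

variable {F : Type*} [Field F] [Algebra (ZMod 2) F] [Fintype F] {m l : ℕ}

lemma monomialSum_sq_of_pow_cofactor_ne_one (hF : Fintype.card F = (2 ^ m) ^ (2 * l)) {a : F}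
    (ha0 : a ≠ 0) (ha : a ^ cofactor (2 ^ m) l ≠ 1) :
    monomialSum (2 ^ m + 1) a ^ 2 = Fintype.card F := by
  refine monomialSum_sq_eq_card fun w hw hfix ↦ ha ?_
  have hroot : (a * w ^ (2 ^ m + 1)) ^ (2 ^ m - 1) = 1 :=
    mul_right_cancel₀ (mul_ne_zero ha0 (pow_ne_zero _ hw)) <| by
      rw [pow_sub_one_mul (by positivity), hfix, one_mul]
  calc a ^ cofactor (2 ^ m) l = (a * w ^ (2 ^ m + 1)) ^ cofactor (2 ^ m) l := by
        rw [mul_pow, ← pow_mul, mul_comm (2 ^ m + 1), pow_cofactor_mul_succ hF hw, mul_one]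
    _ = 1 := by rw [cofactor, pow_mul, hroot, one_pow]

-- The square fixes the value up to sign, and the congruence modulo `2 ^ m + 1` fixes the sign.
lemma monomialSum_of_pow_cofactor_ne_one (hF : Fintype.card F = (2 ^ m) ^ (2 * l)) {a : F}
    (ha0 : a ≠ 0) (ha : a ^ cofactor (2 ^ m) l ≠ 1) :
    monomialSum (2 ^ m + 1) a = (-2 ^ m) ^ l := by
  have hq : (2 : ℤ) ≤ 2 ^ m := by exact_mod_cast two_le_two_pow_of_card hF
  have hsq : monomialSum (2 ^ m + 1) a ^ 2 = ((-2 ^ m) ^ l) ^ 2 := by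
    rw [monomialSum_sq_of_pow_cofactor_ne_one hF ha0 ha, hF, Nat.cast_pow, Nat.cast_pow,
      ← pow_mul (-2 ^ m : ℤ), mul_comm l, (even_two_mul l).neg_pow, Nat.cast_ofNat]
  have hdvd : 2 ^ m + 1 ∣ Fintype.card F - 1 :=
    cofactor_mul_succ_eq_card_sub_one hF ▸ Nat.dvd_mul_left _ _
  refine eq_of_sq_eq_sq_of_dvd_sub_one (n := 2 ^ m + 1) (by linarith) hsq
    (by exact_mod_cast dvd_monomialSum_sub_one hdvd a) ?_
  have := sub_dvd_pow_sub_pow (-2 ^ m : ℤ) 1 l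
  rwa [one_pow, ← neg_dvd, neg_sub', neg_neg, sub_neg_eq_add] at this

lemma monomialSum_eq_monomialSum_one (hF : Fintype.card F = (2 ^ m) ^ (2 * l)) {g : Fˣ}
    (hg : (g : F) ^ cofactor (2 ^ m) l = 1) :
    monomialSum (2 ^ m + 1) (g : F) = monomialSum (2 ^ m + 1) (1 : F) := by
  classical
  obtain ⟨h, rfl⟩ := exists_pow_eq_of_pow_eq_one (n := 2 ^ m + 1) (by
    rw [Nat.card_eq_fintype_card, Fintype.card_units, cofactor_mul_succ_eq_card_sub_one hF])
    (Units.ext hg)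
  rw [Units.val_pow_eq_pow_val, ← one_mul ((h : F) ^ _), monomialSum_mul_pow _ _ h.ne_zero]

-- The sums over all `a` add up to `card F`, which is already the term at `a = 0`; so the terms at
-- nonzero `a` cancel, and those with `a ^ cofactor ≠ 1` are known.
lemma monomialSum_one (hF : Fintype.card F = (2 ^ m) ^ (2 * l)) :
    monomialSum (2 ^ m + 1) (1 : F) = (-2 ^ m) ^ (l + 1) := by
  classical
  have hunits : ∑ g : Fˣ, monomialSum (2 ^ m + 1) (g : F) = 0 := by
    have htotal := sum_monomialSum (F := F) (Nat.succ_ne_zero (2 ^ m))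
    rwa [sum_eq_apply_zero_add_sum_units, monomialSum_zero_right, add_eq_left] at htotal
  have hvalue (g : Fˣ) : monomialSum (2 ^ m + 1) (g : F) = (-2 ^ m) ^ l +
      if (g : F) ^ (cofactor (2 ^ m) l * 1) = 1 then
        monomialSum (2 ^ m + 1) (1 : F) - (-2 ^ m) ^ l else 0 := by
    rw [mul_one]
    split_ifs with hg
    · rw [monomialSum_eq_monomialSum_one hF hg, add_sub_cancel]
    · rw [monomialSum_of_pow_cofactor_ne_one hF g.ne_zero hg, add_zero]
  simp only [hvalue, sum_add_distrib, ← sum_filter, sum_const, card_filter_units_pow_eq_one hF,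
    card_univ, Fintype.card_units, ← cofactor_mul_succ_eq_card_sub_one hF, nsmul_eq_mul,
    Nat.gcd_one_left] at hunits
  have hpos : (cofactor (2 ^ m) l : ℤ) ≠ 0 := by exact_mod_cast (cofactor_pos hF).ne'
  refine mul_left_cancel₀ hpos ?_
  push_cast at hunits
  linear_combination hunits

lemma monomialSum_of_pow_cofactor_eq_one (hF : Fintype.card F = (2 ^ m) ^ (2 * l)) {a : F}
    (ha0 : a ≠ 0) (ha : a ^ cofactor (2 ^ m) l = 1) :
    monomialSum (2 ^ m + 1) a = (-2 ^ m) ^ (l + 1) :=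
  (monomialSum_eq_monomialSum_one hF (g := Units.mk0 a ha0) ha).trans (monomialSum_one hF)

end SemiprimitiveCase

section CharacterSum

section CharTwo

variable {F : Type*} [Field F] [CharP F 2] {m : ℕ}

lemma one_add_pow_cofactor_mul_pow (l : ℕ) {t : F} (ht : t ^ (2 ^ m + 1) = 1) (ht1 : t ≠ 1) :
    (1 + t) ^ cofactor (2 ^ m) l * t ^ l = 1 := by
  have hbase : (1 + t) ^ (2 ^ m - 1) * t = 1 := by
    have hne : 1 + t ≠ 0 := fun h ↦ ht1 (CharTwo.add_eq_zero.1 h).symm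
    refine mul_right_cancel₀ hne ?_
    rw [mul_right_comm, pow_sub_one_mul (by positivity), add_pow_char_pow, one_pow]
    linear_combination ht
  have hexp := pow_eq_pow_of_modEq (sum_sq_pow_modEq (Nat.one_le_two_pow (n := m)) l) ht
  rw [cofactor, pow_mul, ← hexp, ← mul_pow, hbase, one_pow]

lemma pow_cofactor_mul_one_add_pow [Fintype F] {l σ : ℕ}
    (hF : Fintype.card F = (2 ^ m) ^ (2 * l)) (hlσ : 1 ≤ l * σ) {g : F} (hg0 : g ≠ 0)
    (hg : g ^ (cofactor (2 ^ m) l * σ) ≠ 1) :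
    (g * (1 + g ^ (cofactor (2 ^ m) l * σ))) ^ cofactor (2 ^ m) l *
      g ^ (cofactor (2 ^ m) l * (l * σ - 1)) = 1 := by
  have ht : (g ^ (cofactor (2 ^ m) l * σ)) ^ (2 ^ m + 1) = 1 := by
    rw [← pow_mul, mul_right_comm, pow_mul, pow_cofactor_mul_succ hF hg0, one_pow]
  calc _ = (1 + g ^ (cofactor (2 ^ m) l * σ)) ^ cofactor (2 ^ m) l *
          (g ^ (cofactor (2 ^ m) l * σ)) ^ l := by
        rw [mul_pow, mul_right_comm, ← pow_add, ← mul_one_add, ← pow_mul (g : F) _ l,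
          mul_assoc _ σ, mul_comm σ, add_tsub_cancel_of_le hlσ, mul_comm]
    _ = 1 := one_add_pow_cofactor_mul_pow l ht hg

end CharTwo

variable {F : Type*} [Field F] [Algebra (ZMod 2) F] [Fintype F] {m l σ : ℕ}

-- Both sides equal the double sum of the character at `x * (1 + x ^ k)` with `x = g * y ^ n` over
-- units `g` and `y`: the factor `1 + x ^ k` depends only on `g`.
lemma card_sub_one_mul_sum_traceChar [DecidableEq F] {n k : ℕ} (hn : n ≠ 0)
    (hk : Fintype.card F - 1 ∣ n * k) :
    ((Fintype.card F - 1 : ℕ) : ℤ) * ∑ x : F, traceChar F (x * (1 + x ^ k)) =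
      ∑ g : Fˣ, monomialSum n (g * (1 + g ^ k) : F) := by
  have hpow (y : Fˣ) : (y : F) ^ (n * k) = 1 := by
    obtain ⟨c, hc⟩ := hk
    rw [hc, pow_mul, FiniteField.pow_card_sub_one_eq_one _ y.ne_zero, one_pow]
  have htranslate (y : Fˣ) : ∑ g : Fˣ, traceChar F (g * (1 + g ^ k)) =
      ∑ g : Fˣ, traceChar F (g * (1 + g ^ k) * y ^ n) := by
    rw [← Equiv.sum_comp (Equiv.mulRight (y ^ n))]
    refine sum_congr rfl fun g _ ↦ congrArg _ ?_
    simp only [Equiv.coe_mulRight, Units.val_mul, Units.val_pow_eq_pow_val, mul_pow, ← pow_mul,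
      hpow, mul_one]
    ring
  calc _ = ∑ _y : Fˣ, (1 + ∑ g : Fˣ, traceChar F (g * (1 + g ^ k))) := by
        simp [sum_eq_apply_zero_add_sum_units (fun x : F ↦ traceChar F (x * (1 + x ^ k))),
          Fintype.card_units]
    _ = ∑ g : Fˣ, (1 + ∑ y : Fˣ, traceChar F (g * (1 + g ^ k) * y ^ n)) := by
        rw [sum_add_distrib, sum_add_distrib, sum_congr rfl fun y _ ↦ htranslate y, sum_comm]
    _ = _ := by simp only [monomialSum_eq_one_add_sum_units hn]

lemma monomialSum_mul_one_add_pow [DecidableEq F] (hF : Fintype.card F = (2 ^ m) ^ (2 * l))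
    (hlσ : 1 ≤ l * σ) {g : F} (hg0 : g ≠ 0) {r : ℕ} (hg : g ^ (r * σ) = g) :
    monomialSum (2 ^ m + 1) (g * (1 + g ^ (cofactor (2 ^ m) l * σ))) =
      (-2 ^ m) ^ l + (if g ^ cofactor (2 ^ m) l = 1 then
        ((-2 ^ m) ^ l) ^ 2 + 2 ^ m * (-2 ^ m) ^ l else 0) -
      if g ^ (cofactor (2 ^ m) l * (l * σ - 1)) = 1 then
        (-2 ^ m) ^ l + 2 ^ m * (-2 ^ m) ^ l else 0 := by
  have : CharP F 2 := charP_of_injective_algebraMap' (ZMod 2) 2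
  by_cases hroot : g ^ cofactor (2 ^ m) l = 1
  · have hcard : (Fintype.card F : ℤ) = ((-2 ^ m) ^ l) ^ 2 := by
      rw [hF, ← pow_mul (-2 ^ m : ℤ), mul_comm l, (even_two_mul l).neg_pow]
      norm_cast
    simp only [pow_mul g, hroot, one_pow, CharTwo.add_self_eq_zero, mul_zero,
      monomialSum_zero_right, if_true, hcard]
    ring
  · have ht : g ^ (cofactor (2 ^ m) l * σ) ≠ 1 := by
      refine fun h ↦ hroot ?_
      rw [← hg, ← pow_mul, mul_assoc, mul_comm σ, mul_comm, pow_mul, h, one_pow]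
    have ha0 : g * (1 + g ^ (cofactor (2 ^ m) l * σ)) ≠ 0 :=
      mul_ne_zero hg0 fun h ↦ ht (CharTwo.add_eq_zero.1 h).symm
    have hprod := pow_cofactor_mul_one_add_pow hF hlσ hg0 ht
    rw [if_neg hroot, add_zero]
    split_ifs with hpow
    · rw [hpow, mul_one] at hprod
      rw [monomialSum_of_pow_cofactor_eq_one hF ha0 hprod]
      ring
    · have ha : (g * (1 + g ^ (cofactor (2 ^ m) l * σ))) ^ cofactor (2 ^ m) l ≠ 1 :=
        fun h ↦ hpow (by rwa [h, one_mul] at hprod)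
      rw [monomialSum_of_pow_cofactor_ne_one hF ha0 ha, sub_zero]

theorem succ_mul_sum_traceChar (hF : Fintype.card F = (2 ^ m) ^ (2 * l)) (hlσ : 1 ≤ l * σ) {s : ℕ}
    (hσ : 2 ^ s * σ ≡ 1 [MOD Fintype.card F - 1]) :
    (2 ^ m + 1) * ∑ x : F, traceChar F (x + x ^ (cofactor (2 ^ m) l + 2 ^ s)) =
      (-2 ^ m) ^ l * ((-2 ^ m) ^ l + 2 * 2 ^ m + 1 -
        (l * σ - 1).gcd (2 ^ m + 1) * (2 ^ m + 1)) := by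
  classical
  have hfix (x : F) : x ^ (2 ^ s * σ) = x :=
    pow_eq_self_of_modEq_one hσ (mul_ne_zero (by positivity) (Nat.pos_of_mul_pos_left hlσ).ne') x
  have hdvd : Fintype.card F - 1 ∣ (2 ^ m + 1) * (cofactor (2 ^ m) l * σ) := by
    rw [← cofactor_mul_succ_eq_card_sub_one hF]
    exact ⟨σ, by ring⟩
  have hsum := card_sub_one_mul_sum_traceChar (F := F) (Nat.succ_ne_zero _) hdvd
  have hcard_one := card_filter_units_pow_eq_one hF 1
  rw [mul_one, Nat.gcd_one_left, mul_one] at hcard_one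
  simp only [monomialSum_mul_one_add_pow hF hlσ (Units.ne_zero _) (hfix _), sum_add_distrib,
    sum_sub_distrib, ← sum_filter, sum_const, hcard_one, card_filter_units_pow_eq_one hF,
    card_univ, Fintype.card_units, ← cofactor_mul_succ_eq_card_sub_one hF, nsmul_eq_mul] at hsum
  have hpos : (cofactor (2 ^ m) l : ℤ) ≠ 0 := by exact_mod_cast (cofactor_pos hF).ne'
  refine mul_left_cancel₀ hpos ?_
  simp only [traceChar_add_pow_add_two_pow (hfix _)]
  push_cast at hsum
  linear_combination hsum

end CharacterSum

section WeilSum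

variable {m l s d σ u : ℕ}

theorem succ_mul_binaryWeilSum_one (hm : 1 ≤ m) (hl : l ≠ 0)
    (hd : d = (2 ^ (2 * l * m) - 1) / (2 ^ m + 1) + 2 ^ s)
    (hσ : 2 ^ s * σ ≡ 1 [MOD 2 ^ (2 * l * m) - 1])
    (hu : u = Nat.gcd (d * σ + 1) (2 ^ m + 1)) :
    (2 ^ m + 1) * binaryWeilSum (2 * l * m) d 1 =
      (-2 ^ m) ^ l * ((-2 ^ m) ^ l + 2 * 2 ^ m + 1 - u * (2 ^ m + 1)) := by
  have hq : 1 ≤ 2 ^ m := Nat.one_le_two_pow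
  have hexp : 2 ^ (2 * l * m) = (2 ^ m) ^ (2 * l) := by rw [← pow_mul, mul_comm]
  have hF : Fintype.card (GaloisField 2 (2 * l * m)) = (2 ^ m) ^ (2 * l) := by
    rw [← Nat.card_eq_fintype_card, GaloisField.card 2 _ (by positivity), hexp]
  rw [hexp, ← cofactor_mul_succ hq] at hσ hd
  rw [Nat.mul_div_cancel _ (Nat.succ_pos _)] at hd
  have hσ_succ : 2 ^ s * σ ≡ 1 [MOD 2 ^ m + 1] := hσ.of_mul_left _
  have hlσ : 1 ≤ l * σ := by
    refine Nat.one_le_iff_ne_zero.2 (mul_ne_zero hl ?_)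
    rintro rfl
    have := (Nat.modEq_iff_dvd' zero_le_one).1 hσ_succ
    simp at this
  have hsum := succ_mul_sum_traceChar hF hlσ (s := s)
    (by rwa [← cofactor_mul_succ_eq_card_sub_one hF])
  rw [hu, hd, gcd_cofactor_add_mul_add_one hq (by simp [Nat.even_pow]; omega) hlσ hσ_succ,
    ← hsum]
  simp only [binaryWeilSum, traceChar_apply, one_mul]

theorem weil_sum_at_one_u_lt_general (hm : 1 ≤ m) (hl : Even l) (hl0 : l ≠ 0)
    (hd : d = (2 ^ (2 * l * m) - 1) / (2 ^ m + 1) + 2 ^ s)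
    (hσ : 2 ^ s * σ ≡ 1 [MOD 2 ^ (2 * l * m) - 1])
    (hu : u = Nat.gcd (d * σ + 1) (2 ^ m + 1)) (hult : u < 2 ^ m + 1) :
    (2 ^ (l * m + 1) : ℤ) ≤ binaryWeilSum (2 * l * m) d 1 := by
  have heval := succ_mul_binaryWeilSum_one hm hl0 hd hσ hu
  have hq : 2 ≤ 2 ^ m := Nat.le_self_pow (by omega) 2
  have hu_succ : (u + 1 : ℤ) ≤ 2 ^ m := by
    exact_mod_cast succ_le_of_dvd_succ_of_lt hq (hu ▸ Nat.gcd_dvd_right _ _) hult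
  have hsq : ((2 ^ m) ^ 2 : ℤ) ≤ (2 ^ m) ^ l :=
    pow_le_pow_right₀ (by exact_mod_cast hq.trans' one_le_two) (by grind)
  have hbracket : 2 * (2 ^ m + 1 : ℤ) ≤ (2 ^ m) ^ l + 2 * 2 ^ m + 1 - u * (2 ^ m + 1) := by
    nlinarith
  refine le_of_mul_le_mul_left ?_ (by positivity : (0 : ℤ) < 2 ^ m + 1)
  calc (2 ^ m + 1 : ℤ) * 2 ^ (l * m + 1) = (2 ^ m) ^ l * (2 * (2 ^ m + 1)) := by ring
    _ ≤ (2 ^ m) ^ l * ((2 ^ m) ^ l + 2 * 2 ^ m + 1 - u * (2 ^ m + 1)) := by gcongr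
    _ = (2 ^ m + 1) * binaryWeilSum (2 * l * m) d 1 := by rw [heval, hl.neg_pow]

end WeilSum

/-- For `l = 2`, `d = (2^(4m)-1)/(2^m+1) + 2^s` coprime to `2^(4m)-1`, `σ` the
inverse of `2^s` modulo `2^(4m)-1`, and `u = gcd(dσ+1, 2^m+1)`: if `u < 2^m+1`
then `S_d(1) ≥ 2^(2m+1)`. -/
theorem weil_sum_at_one_u_lt (m l s d σ u : ℕ) (hm : 1 ≤ m) (hl : l = 2)
    (hs : s ≤ 2 * m - 1)
    (hd : d = (2 ^ (2 * l * m) - 1) / (2 ^ m + 1) + 2 ^ s)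
    (hgcd : Nat.gcd d (2 ^ (2 * l * m) - 1) = 1)
    (hσ : 2 ^ s * σ ≡ 1 [MOD 2 ^ (2 * l * m) - 1])
    (hu : u = Nat.gcd (d * σ + 1) (2 ^ m + 1)) (hult : u < 2 ^ m + 1) :
    (2 ^ (2 * m + 1) : ℤ) ≤ binaryWeilSum (2 * l * m) d 1 := by
  subst hl
  exact weil_sum_at_one_u_lt_general hm even_two two_ne_zero hd hσ hu hult
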